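/- arXiv:1202.0472 — 2 statements merged into one kernel-verified Lean document; each statement's English description precedes it below -/
import Mathlib

section
/- Let X ⊂ ℝⁿ, α ∈ (0,∞), p ∈ [3α,∞) and x ∈ ℝⁿ with 0 < Θ_*^α(X,x) ≤ Θ^{*α}(X,x) < ∞. If M_p^α(X) < ∞, then X has a weak approximate α-tangent at x. -/
open MeasureTheory Metric Set Filter
open scoped ENNReal Topology Classical

noncomputable section

/-- The affine line through `x` and `y`. -/
def lineThrough {n : ℕ} (x y : EuclideanSpace ℝ (Fin n)) : Set (EuclideanSpace ℝ (Fin n)) :=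
  {p | ∃ t : ℝ, p = x + t • (y - x)}

/-- The inverse circumradius `κ(x,y,z)` of a triple of points, set to `0` when the
points are not pairwise distinct. -/
def kappa {n : ℕ} (x y z : EuclideanSpace ℝ (Fin n)) : ℝ≥0∞ :=
  if x ≠ y ∧ y ≠ z ∧ x ≠ z then
    ENNReal.ofReal (2 * Metric.infDist z (lineThrough x y) / (‖x - z‖ * ‖y - z‖))
  else 0

/-- `κ_G(x) = sup_{v,w ∈ X} κ(x,v,w)`. -/
def kappaG {n : ℕ} (X : Set (EuclideanSpace ℝ (Fin n))) (x : EuclideanSpace ℝ (Fin n)) : ℝ≥0∞ :=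
  ⨆ v ∈ X, ⨆ w ∈ X, kappa x v w

/-- `κ_i(x,y) = sup_{z ∈ X} κ(x,y,z)`. -/
def kappaI {n : ℕ} (X : Set (EuclideanSpace ℝ (Fin n))) (x y : EuclideanSpace ℝ (Fin n)) : ℝ≥0∞ :=
  ⨆ z ∈ X, kappa x y z

/-- The energy `U_p^α(X) = ∫_X κ_G(x)^p dH^α(x)`. -/
def energyU {n : ℕ} (p α : ℝ) (X : Set (EuclideanSpace ℝ (Fin n))) : ℝ≥0∞ :=
  ∫⁻ x in X, kappaG X x ^ p ∂ μH[α]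

/-- The energy `I_p^α(X) = ∫_X ∫_X κ_i(x,y)^p dH^α(x) dH^α(y)`. -/
def energyI {n : ℕ} (p α : ℝ) (X : Set (EuclideanSpace ℝ (Fin n))) : ℝ≥0∞ :=
  ∫⁻ y in X, ∫⁻ x in X, kappaI X x y ^ p ∂ μH[α] ∂ μH[α]

/-- The integral Menger curvature `M_p^α(X)`. -/
def energyM {n : ℕ} (p α : ℝ) (X : Set (EuclideanSpace ℝ (Fin n))) : ℝ≥0∞ :=
  ∫⁻ z in X, ∫⁻ y in X, ∫⁻ x in X, kappa x y z ^ p ∂ μH[α] ∂ μH[α] ∂ μH[α]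

/-- The open double cone about `x` in direction `s` with opening angle `ε`. -/
def cone {n : ℕ} (s : EuclideanSpace ℝ (Fin n)) (ε : ℝ) (x : EuclideanSpace ℝ (Fin n)) :
    Set (EuclideanSpace ℝ (Fin n)) :=
  {y | y ≠ x ∧
    min (InnerProductGeometry.angle (y - x) s) (InnerProductGeometry.angle (y - x) (-s)) < ε}

/-- `X` has an approximate `α`-tangent at `x`. -/
def HasApproxTangent {n : ℕ} (α : ℝ) (X : Set (EuclideanSpace ℝ (Fin n)))
    (x : EuclideanSpace ℝ (Fin n)) : Prop :=
  ∃ s : EuclideanSpace ℝ (Fin n), ‖s‖ = 1 ∧ ∀ ε > (0:ℝ),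
    Filter.Tendsto
      (fun r : ℝ => μH[α] ((X \ cone s ε x) ∩ Metric.closedBall x r) / ENNReal.ofReal (2 * r) ^ α)
      (𝓝[>] 0) (𝓝 0)

/-- `X` has a weak approximate `α`-tangent at `x`. -/
def HasWeakApproxTangent {n : ℕ} (α : ℝ) (X : Set (EuclideanSpace ℝ (Fin n)))
    (x : EuclideanSpace ℝ (Fin n)) : Prop :=
  ∃ ρ > (0:ℝ), ∃ s : ℝ → EuclideanSpace ℝ (Fin n), (∀ r ∈ Set.Ioo (0:ℝ) ρ, ‖s r‖ = 1) ∧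
    ∀ ε > (0:ℝ),
      Filter.Tendsto
        (fun r : ℝ =>
          μH[α] ((X \ cone (s r) ε x) ∩ Metric.closedBall x r) / ENNReal.ofReal (2 * r) ^ α)
        (𝓝[>] 0) (𝓝 0)

/-- Lower `α`-density of `X` at `x`. -/
def lowerDensity {n : ℕ} (α : ℝ) (X : Set (EuclideanSpace ℝ (Fin n)))
    (x : EuclideanSpace ℝ (Fin n)) : ℝ≥0∞ :=
  Filter.liminf
    (fun r : ℝ => μH[α] (X ∩ Metric.closedBall x r) / ENNReal.ofReal (2 * r) ^ α) (𝓝[>] 0)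

/-- Upper `α`-density of `X` at `x`. -/
def upperDensity {n : ℕ} (α : ℝ) (X : Set (EuclideanSpace ℝ (Fin n)))
    (x : EuclideanSpace ℝ (Fin n)) : ℝ≥0∞ :=
  Filter.limsup
    (fun r : ℝ => μH[α] (X ∩ Metric.closedBall x r) / ENNReal.ofReal (2 * r) ^ α) (𝓝[>] 0)


/-!
Work with the measure `ν = H^α ⌞ X` and suppose that, at a small scale `r`, every double cone of
opening `ε` misses a mass `> ε (2r)^α` of the ball `B(x, r)`. Since a tiny concentric ball carries
little mass, cutting it out leaves an annulus with mass comparable to `r^α`. For each `y` in the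
annulus, apply the assumption to the direction `y - x`: a set of points `z` of the annulus with mass
comparable to `r^α` sees `y` at an angle `≥ ε` from `x`. For such `y`, `z` and every `a` in
`B(x, δr)`, the distance of `z` from the line through `a` and `y` is at least `δr`, so that
`κ(a, y, z) ≥ δ / (2r)`. These triples contribute at least a constant times
`r^{-p} r^α r^α r^α ≥ 1` to the energy of `B(x, r)`, whereas that energy tends to zero with `r`
because the total energy is finite. Hence for each `ε` good directions exist at all small scales,
and a diagonal choice makes them independent of `ε`.
-/

section Geometry

open InnerProductGeometry

variable {V : Type*} [NormedAddCommGroup V] [InnerProductSpace ℝ V]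

lemma norm_mul_sin_angle_le_norm_sub_smul (w v : V) (t : ℝ) :
    ‖w‖ * Real.sin (angle w v) ≤ ‖w - t • v‖ := by
  rcases eq_or_ne v 0 with rfl | hv
  · simp
  have area_le : √(inner ℝ w w * inner ℝ v v - inner ℝ w v * inner ℝ w v) ≤
      ‖w - t • v‖ * ‖v‖ := by
    refine Real.sqrt_le_iff.mpr ⟨by positivity, ?_⟩
    rw [mul_pow, norm_sub_sq_real, inner_smul_right, norm_smul, mul_pow, Real.norm_eq_abs, sq_abs,
      real_inner_self_eq_norm_sq, real_inner_self_eq_norm_sq]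
    linarith [sq_nonneg (t * ‖v‖ ^ 2 - inner ℝ w v)]
  rw [← sin_angle_mul_norm_mul_norm] at area_le
  refine le_of_mul_le_mul_right ?_ (norm_pos_iff.mpr hv)
  linarith

lemma sin_le_sin_of_mem_Icc_pi_sub {ε θ : ℝ} (hε : 0 ≤ ε) (hθ : θ ∈ Icc ε (Real.pi - ε)) :
    Real.sin ε ≤ Real.sin θ := by
  obtain ⟨hεθ, hθε⟩ := hθ
  rcases le_total θ (Real.pi / 2) with h | h
  · exact Real.sin_le_sin_of_le_of_le_pi_div_two (by linarith [Real.pi_pos]) h hεθ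
  · rw [← Real.sin_pi_sub θ]
    exact Real.sin_le_sin_of_le_of_le_pi_div_two (by linarith [Real.pi_pos]) (by linarith)
      (by linarith)

lemma norm_sub_smul_le_norm_sub_lineMap_add (u v w : V) (t : ℝ) :
    ‖w - t • v‖ ≤ ‖w - AffineMap.lineMap u v t‖ + (1 + |t|) * ‖u‖ := by
  have decomposition : w - t • v = (w - AffineMap.lineMap u v t) + (1 - t) • u := by
    rw [AffineMap.lineMap_apply_module']
    module
  rw [decomposition]
  refine (norm_add_le _ _).trans ?_
  rw [norm_smul, Real.norm_eq_abs]
  gcongr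
  simpa using abs_sub (1 : ℝ) t

lemma abs_mul_norm_sub_le_norm_sub_lineMap_add (u v w : V) (t : ℝ) :
    |t| * ‖v - u‖ ≤ ‖w - AffineMap.lineMap u v t‖ + ‖w‖ + ‖u‖ := by
  have decomposition : t • (v - u) = w - (w - AffineMap.lineMap u v t) - u := by
    rw [AffineMap.lineMap_apply_module']
    abel
  rw [← Real.norm_eq_abs, ← norm_smul, decomposition]
  linarith [norm_sub_le (w - (w - AffineMap.lineMap u v t)) u,
    norm_sub_le w (w - AffineMap.lineMap u v t)]

lemma mul_le_norm_sub_lineMap {u v w : V} {δ ε k r : ℝ} (hr : 0 < r) (hk : 0 < k) (hε : 0 ≤ ε)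
    (hδ : δ ≤ k ^ 2 * Real.sin ε / 8) (hu : ‖u‖ ≤ δ * r) (hv : k * r ≤ ‖v‖)
    (hw : k * r ≤ ‖w‖) (hwr : ‖w‖ ≤ r) (hangle : angle w v ∈ Icc ε (Real.pi - ε)) (t : ℝ) :
    δ * r ≤ ‖w - AffineMap.lineMap u v t‖ := by
  by_contra! hlt
  have hk_le : k ≤ 1 := le_of_mul_le_mul_right (by linarith) hr
  have hδ_nonneg : 0 ≤ δ := nonneg_of_mul_nonneg_left ((norm_nonneg u).trans hu) hr
  have hδ_le : δ ≤ k / 8 := by nlinarith [Real.sin_le_one ε, sq_nonneg k]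
  have base_le : k * r / 2 ≤ ‖v - u‖ := by nlinarith [norm_sub_norm_le v u]
  have abs_t_le : |t| * k ≤ 6 := by
    have := abs_mul_norm_sub_le_norm_sub_lineMap_add u v w t
    have : |t| * (k * r / 2) ≤ |t| * ‖v - u‖ := by gcongr
    exact le_of_mul_le_mul_right (by nlinarith) hr
  have height_le : k * r * Real.sin ε ≤ ‖w - t • v‖ :=
    calc k * r * Real.sin ε ≤ k * r * Real.sin (angle w v) := by
          gcongr
          exact sin_le_sin_of_mem_Icc_pi_sub hε hangle
      _ ≤ ‖w‖ * Real.sin (angle w v) := by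
          gcongr
          exact sin_angle_nonneg w v
      _ ≤ ‖w - t • v‖ := norm_mul_sin_angle_le_norm_sub_smul w v t
  have height_lt : k * r * Real.sin ε < (2 + |t|) * (δ * r) := by
    have := norm_sub_smul_le_norm_sub_lineMap_add u v w t
    have : (1 + |t|) * ‖u‖ ≤ (1 + |t|) * (δ * r) := by gcongr
    linarith
  have : k ^ 2 * Real.sin ε * r < 8 * δ * r :=
    calc k ^ 2 * Real.sin ε * r = k * (k * r * Real.sin ε) := by ring
      _ < k * ((2 + |t|) * (δ * r)) := by gcongr
      _ = (2 * k + |t| * k) * (δ * r) := by ring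
      _ ≤ 8 * (δ * r) := by
          gcongr
          linarith
      _ = 8 * δ * r := by ring
  linarith [lt_of_mul_lt_mul_right this hr.le]

end Geometry

section ConeAndCurvature

open InnerProductGeometry

variable {n : ℕ} {x : EuclideanSpace ℝ (Fin n)} {ε : ℝ}

lemma notMem_cone_iff {s y : EuclideanSpace ℝ (Fin n)} (hyx : y ≠ x) :
    y ∉ cone s ε x ↔ angle (y - x) s ∈ Icc ε (Real.pi - ε) := by
  simp only [cone, mem_ofPred_eq, hyx, ne_eq, not_false_eq_true, true_and, not_lt, le_min_iff,
    angle_neg_right, mem_Icc, le_sub_comm]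

lemma cone_smul_of_pos {t : ℝ} (ht : 0 < t) (s : EuclideanSpace ℝ (Fin n)) :
    cone (t • s) ε x = cone s ε x := by
  simp only [cone, ← smul_neg, angle_smul_right_of_pos _ _ ht]

lemma cone_mono (s x : EuclideanSpace ℝ (Fin n)) : Monotone fun ε => cone s ε x :=
  fun _ _ h _ hy => ⟨hy.1, hy.2.trans_le h⟩

variable (ε x) in
lemma measurableSet_mem_cone :
    MeasurableSet {q : EuclideanSpace ℝ (Fin n) × EuclideanSpace ℝ (Fin n) |
      q.1 ∈ cone q.2 ε x} := by
  have measurable_angle : Measurable fun q : EuclideanSpace ℝ (Fin n) × EuclideanSpace ℝ (Fin n) =>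
      angle (q.1 - x) q.2 := by
    unfold angle
    fun_prop
  simp only [cone, angle_neg_right, mem_ofPred_eq]
  exact ((measurableSet_singleton x).compl.preimage measurable_fst).inter
    (measurableSet_lt (measurable_angle.min (measurable_const.sub measurable_angle))
      measurable_const)

lemma measurableSet_cone (s : EuclideanSpace ℝ (Fin n)) : MeasurableSet (cone s ε x) :=
  measurable_prodMk_right (measurableSet_mem_cone x ε)

variable {a b c : EuclideanSpace ℝ (Fin n)} {δ k r : ℝ}

lemma mul_le_infDist_lineThrough (hr : 0 < r) (hk : 0 < k) (hε : 0 ≤ ε)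
    (hδ : δ ≤ k ^ 2 * Real.sin ε / 8) (ha : a ∈ closedBall x (δ * r))
    (hb : b ∉ closedBall x (k * r)) (hc : c ∈ closedBall x r \ closedBall x (k * r))
    (hcone : c ∉ cone (b - x) ε x) :
    δ * r ≤ infDist c (lineThrough a b) := by
  have hcx : c ≠ x := by
    rintro rfl
    exact hc.2 (mem_closedBall_self (by positivity))
  simp only [Set.mem_sdiff, mem_closedBall, dist_eq_norm, not_le] at ha hb hc
  have line_nonempty : (lineThrough a b).Nonempty := ⟨a, 0, by simp⟩
  refine (le_infDist line_nonempty).mpr ?_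
  rintro _ ⟨t, rfl⟩
  convert mul_le_norm_sub_lineMap hr hk hε hδ ha hb.le hc.2.le hc.1
    ((notMem_cone_iff hcx).mp hcone) t using 1
  rw [dist_eq_norm, AffineMap.lineMap_apply_module']
  congr 1
  module

lemma ofReal_div_le_kappa_of_le_infDist {d D : ℝ} (hd : 0 < d) (hab : a ≠ b)
    (hdist : d ≤ infDist c (lineThrough a b)) (hac : dist a c ≤ D) (hbc : dist b c ≤ D) :
    ENNReal.ofReal (2 * d / (D * D)) ≤ kappa a b c := by
  have notMem_line : c ∉ lineThrough a b := fun h => by linarith [infDist_zero_of_mem h]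
  have hac_ne : a ≠ c := fun h => notMem_line ⟨0, by simp [h]⟩
  have hbc_ne : b ≠ c := fun h => notMem_line ⟨1, by simp [h]⟩
  have hac_pos : 0 < dist a c := dist_pos.mpr hac_ne
  have hbc_pos : 0 < dist b c := dist_pos.mpr hbc_ne
  have hD : 0 ≤ D := hac_pos.le.trans hac
  have hdist_nonneg : 0 ≤ infDist c (lineThrough a b) := infDist_nonneg
  rw [kappa, if_pos ⟨hab, hbc_ne, hac_ne⟩, ← dist_eq_norm, ← dist_eq_norm]
  gcongr

lemma ofReal_div_le_kappa (hr : 0 < r) (hk : 0 < k) (hε : 0 ≤ ε) (hδ_pos : 0 < δ)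
    (hδ : δ ≤ k ^ 2 * Real.sin ε / 8) (ha : a ∈ closedBall x (δ * r))
    (hb : b ∈ closedBall x r \ closedBall x (k * r))
    (hc : c ∈ closedBall x r \ closedBall x (k * r)) (hcone : c ∉ cone (b - x) ε x) :
    ENNReal.ofReal δ / ENNReal.ofReal (2 * r) ≤ kappa a b c := by
  have hkr : k * r < r := (not_le.mp hb.2).trans_le hb.1
  have hk_lt : k < 1 := by nlinarith
  have hδk : δ ≤ k := by nlinarith [Real.sin_le_one ε]
  have ball_subset : closedBall x (δ * r) ⊆ closedBall x (k * r) :=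
    closedBall_subset_closedBall (by gcongr)
  have hab : a ≠ b := fun h => hb.2 (ball_subset (h ▸ ha))
  have dist_le {y : EuclideanSpace ℝ (Fin n)} (hy : y ∈ closedBall x r) : dist y c ≤ 2 * r := by
    linarith [dist_triangle_right y c x, mem_closedBall.mp hy, mem_closedBall.mp hc.1]
  calc ENNReal.ofReal δ / ENNReal.ofReal (2 * r)
      = ENNReal.ofReal (2 * (δ * r) / ((2 * r) * (2 * r))) := by
        rw [← ENNReal.ofReal_div_of_pos (by positivity)]
        congr 1
        field_simp
    _ ≤ kappa a b c := ofReal_div_le_kappa_of_le_infDist (by positivity) hab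
        (mul_le_infDist_lineThrough hr hk hε hδ ha hb.2 hc hcone)
        (dist_le (closedBall_subset_closedBall hkr.le (ball_subset ha))) (dist_le hb.1)

end ConeAndCurvature

section MassAndIntegrals

variable {Ω Ω' : Type*} [MeasurableSpace Ω] [MeasurableSpace Ω'] {μ : Measure Ω} {ν : Measure Ω'}

lemma mul_measure_le_measure_prod [SFinite μ] [SFinite ν] {S : Set (Ω × Ω')}
    (hS : MeasurableSet S) {B : Set Ω'} (hB : MeasurableSet B) {m : ℝ≥0∞}
    (hm : ∀ y ∈ B, m ≤ μ ((fun z => (z, y)) ⁻¹' S)) :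
    m * ν B ≤ μ.prod ν S :=
  calc m * ν B = ∫⁻ _ in B, m ∂ν := (setLIntegral_const B m).symm
    _ ≤ ∫⁻ y in B, μ ((fun z => (z, y)) ⁻¹' S) ∂ν := setLIntegral_mono' hB hm
    _ ≤ ∫⁻ y, μ ((fun z => (z, y)) ⁻¹' S) ∂ν := setLIntegral_le_lintegral _ _
    _ = μ.prod ν S := (Measure.prod_apply_symm hS).symm

lemma mul_measure_prod_le_lintegral_lintegral [SFinite ν] {S : Set (Ω × Ω')}
    (hS : MeasurableSet S) {f : Ω → Ω' → ℝ≥0∞} {K : ℝ≥0∞} (hK : ∀ z y, (z, y) ∈ S → K ≤ f z y) :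
    K * μ.prod ν S ≤ ∫⁻ z, ∫⁻ y, f z y ∂ν ∂μ := by
  rw [Measure.prod_apply hS, ← lintegral_const_mul _ (measurable_measure_prodMk_left hS)]
  gcongr with z
  calc K * ν (Prod.mk z ⁻¹' S) = ∫⁻ _ in Prod.mk z ⁻¹' S, K ∂ν := (setLIntegral_const _ _).symm
    _ ≤ ∫⁻ y in Prod.mk z ⁻¹' S, f z y ∂ν :=
        setLIntegral_mono' (measurable_prodMk_left hS) (hK z)
    _ ≤ ∫⁻ y, f z y ∂ν := setLIntegral_le_lintegral _ _

lemma half_le_measure_diff {A B : Set Ω} {m : ℝ≥0∞} (hm : m ≠ ⊤) (hA : m ≤ μ A)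
    (hB : μ B ≤ m / 2) : m / 2 ≤ μ (A \ B) :=
  calc m / 2 = m - m / 2 := (ENNReal.sub_half hm).symm
    _ ≤ μ A - μ B := tsub_le_tsub hA hB
    _ ≤ μ (A \ B) := le_measure_sdiff

end MassAndIntegrals

section Scaling

lemma one_le_rpow_mul_inv_rpow {R : ℝ≥0∞} {α p : ℝ} (hR : R ≠ 0) (hR_le : R ≤ 1)
    (hp : 3 * α ≤ p) : 1 ≤ R ^ α * R ^ α * R ^ α * (R ^ p)⁻¹ := by
  have hR_top : R ≠ ⊤ := ne_top_of_le_ne_top ENNReal.one_ne_top hR_le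
  rw [← ENNReal.rpow_neg, ← ENNReal.rpow_add _ _ hR hR_top, ← ENNReal.rpow_add _ _ hR hR_top,
    ← ENNReal.rpow_add _ _ hR hR_top]
  simpa using ENNReal.rpow_le_rpow_of_exponent_ge hR_le
    (show α + α + α + -p ≤ 0 by linarith)

lemma ofReal_two_mul_mul_rpow {t r α : ℝ} (ht : 0 ≤ t) (hα : 0 ≤ α) :
    ENNReal.ofReal (2 * (t * r)) ^ α = ENNReal.ofReal t ^ α * ENNReal.ofReal (2 * r) ^ α := by
  rw [mul_left_comm, ENNReal.ofReal_mul ht, ENNReal.mul_rpow_of_nonneg _ _ hα]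

lemma tendsto_const_mul_ofReal_rpow {C : ℝ≥0∞} (hC : C ≠ ⊤) {α : ℝ} (hα : 0 < α) :
    Tendsto (fun t : ℝ => C * ENNReal.ofReal t ^ α) (𝓝 0) (𝓝 0) :=
  (ENNReal.tendsto_const_mul_rpow_nhds_zero_of_pos hC hα).comp
    (by simpa using ENNReal.tendsto_ofReal (tendsto_id (α := ℝ) (x := 𝓝 0)))

lemma exists_pos_const_mul_ofReal_rpow_le {C e : ℝ≥0∞} (hC : C ≠ ⊤) (he : 0 < e) {α : ℝ}
    (hα : 0 < α) : ∃ k > (0 : ℝ), C * ENNReal.ofReal k ^ α ≤ e := by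
  have small : ∀ᶠ k : ℝ in 𝓝[>] 0, C * ENNReal.ofReal k ^ α ≤ e :=
    nhdsWithin_le_nhds ((tendsto_const_mul_ofReal_rpow hC hα).eventually_le_const he)
  exact ((eventually_mem_nhdsWithin (s := Ioi (0 : ℝ))).and small).exists

lemma tendsto_setLIntegral_closedBall_zero {Ω : Type*} [PseudoMetricSpace Ω] [MeasurableSpace Ω]
    {ν : Measure Ω} {x : Ω} {f : Ω → ℝ≥0∞} {C : ℝ≥0∞} {α : ℝ} (hα : 0 < α) (hC : C ≠ ⊤)
    (hup : ∀ᶠ r in 𝓝[>] 0, ν (closedBall x r) ≤ C * ENNReal.ofReal (2 * r) ^ α)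
    (hf : ∫⁻ z, f z ∂ν ≠ ⊤) :
    Tendsto (fun r => ∫⁻ z in closedBall x r, f z ∂ν) (𝓝[>] 0) (𝓝 0) := by
  refine tendsto_setLIntegral_zero hf ?_
  have two_mul_tendsto : Tendsto (fun r : ℝ => 2 * r) (𝓝[>] 0) (𝓝 0) :=
    (Continuous.tendsto' (by fun_prop) 0 0 (mul_zero 2)).mono_left nhdsWithin_le_nhds
  exact tendsto_of_tendsto_of_tendsto_of_le_of_le' tendsto_const_nhds
    ((tendsto_const_mul_ofReal_rpow hC hα).comp two_mul_tendsto)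
    (Eventually.of_forall fun _ => zero_le) hup

lemma exists_eventually_mul_le_of_liminf_pos {α : ℝ} {m : ℝ → ℝ≥0∞}
    (hm : 0 < liminf (fun r => m r / ENNReal.ofReal (2 * r) ^ α) (𝓝[>] 0)) :
    ∃ c : ℝ≥0∞, 0 < c ∧ c ≠ ⊤ ∧ ∀ᶠ r in 𝓝[>] 0, c * ENNReal.ofReal (2 * r) ^ α ≤ m r := by
  obtain ⟨c, hc_pos, hc⟩ := exists_between hm
  exact ⟨c, hc_pos, hc.ne_top, (eventually_lt_of_lt_liminf hc).mono fun r hr =>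
    ENNReal.mul_le_of_le_div hr.le⟩

lemma exists_eventually_le_mul_of_limsup_lt_top {α : ℝ} {m : ℝ → ℝ≥0∞}
    (hm : limsup (fun r => m r / ENNReal.ofReal (2 * r) ^ α) (𝓝[>] 0) < ⊤) :
    ∃ C : ℝ≥0∞, C ≠ ⊤ ∧ ∀ᶠ r in 𝓝[>] 0, m r ≤ C * ENNReal.ofReal (2 * r) ^ α := by
  obtain ⟨C, hC, hC_top⟩ := exists_between hm
  refine ⟨C, hC_top.ne, ?_⟩
  filter_upwards [eventually_lt_of_limsup_lt hC, self_mem_nhdsWithin] with r hr hr_pos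
  have h2r : 0 < ENNReal.ofReal (2 * r) := ENNReal.ofReal_pos.mpr (mul_pos two_pos hr_pos)
  exact (ENNReal.div_le_iff (ENNReal.rpow_pos h2r ENNReal.ofReal_ne_top).ne'
    (ENNReal.rpow_ne_top_of_ne_zero h2r.ne' ENNReal.ofReal_ne_top)).mp hr.le

end Scaling

section Diagonal

lemma exists_forall_eventually_of_forall_eventually_exists {ι S : Type*} [Nonempty S]
    {l : Filter ι} {g : ι → ℝ} (hg : Tendsto g l (𝓝[>] 0)) {Q : ℝ → ι → S → Prop}
    (hmono : ∀ i s, Monotone (Q · i s)) (hQ : ∀ ε > 0, ∀ᶠ i in l, ∃ s, Q ε i s) :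
    ∃ s : ι → S, ∀ ε > 0, ∀ᶠ i in l, Q ε i (s i) := by
  let admissible (i : ι) : Set ℝ := {e | 0 < e ∧ ∃ s, Q e i s}
  have exists_near_optimal (i : ι) : ∃ s, 0 < g i → (admissible i).Nonempty →
      Q (sInf (admissible i) + g i) i s := by
    by_cases h : 0 < g i ∧ (admissible i).Nonempty
    · obtain ⟨e, ⟨-, s, hs⟩, he⟩ := exists_lt_of_csInf_lt h.2 (lt_add_of_pos_right _ h.1)
      exact ⟨s, fun _ _ => hmono i s he.le hs⟩
    · exact ⟨Classical.arbitrary S, fun hgi hne => absurd ⟨hgi, hne⟩ h⟩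
  choose s hs using exists_near_optimal
  refine ⟨s, fun ε hε => ?_⟩
  filter_upwards [hQ (ε / 2) (half_pos hε), hg (Ioo_mem_nhdsGT (half_pos hε))]
    with i hi ⟨hgi_pos, hgi_lt⟩
  have hmem : ε / 2 ∈ admissible i := ⟨half_pos hε, hi⟩
  have hInf : sInf (admissible i) ≤ ε / 2 := csInf_le ⟨0, fun _ he => he.1.le⟩ hmem
  exact hmono i (s i) (by linarith) (hs i hgi_pos ⟨_, hmem⟩)

end Diagonal

section Tangent

variable {n : ℕ} {ν : Measure (EuclideanSpace ℝ (Fin n))} {x : EuclideanSpace ℝ (Fin n)}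
  {α p ε r : ℝ}

/-- The contribution of the point `z` to the integral Menger curvature of a measure `ν`; its
integral for `ν = H^α ⌞ X` is `energyM p α X`. -/
def pointwiseMengerCurvature (p : ℝ) (ν : Measure (EuclideanSpace ℝ (Fin n)))
    (z : EuclideanSpace ℝ (Fin n)) : ℝ≥0∞ :=
  ∫⁻ y, ∫⁻ a, kappa a y z ^ p ∂ν ∂ν

/-- The direction `s` is tangent to `ν` at `x` on the scale `r` up to the error `ε`, which bounds
both the opening of the cone and the normalized mass outside of it. -/
def IsTangentAtScale (ν : Measure (EuclideanSpace ℝ (Fin n))) (α : ℝ)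
    (x : EuclideanSpace ℝ (Fin n)) (ε r : ℝ) (s : EuclideanSpace ℝ (Fin n)) : Prop :=
  ‖s‖ = 1 ∧
    ν (closedBall x r \ cone s ε x) ≤ ENNReal.ofReal ε * ENNReal.ofReal (2 * r) ^ α

lemma IsTangentAtScale.monotone (ν : Measure (EuclideanSpace ℝ (Fin n))) (α : ℝ)
    (x : EuclideanSpace ℝ (Fin n)) (r : ℝ) (s : EuclideanSpace ℝ (Fin n)) :
    Monotone (IsTangentAtScale ν α x · r s) := by
  rintro ε ε' hεε' ⟨hs, hmass⟩
  refine ⟨hs, (measure_mono (sdiff_subset_sdiff_right (cone_mono s x hεε'))).trans ?_⟩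
  exact hmass.trans (by gcongr)

lemma mul_measure_closedBall_le_lintegral_kappa_rpow {δ k : ℝ} {y z : EuclideanSpace ℝ (Fin n)}
    (hr : 0 < r) (hk : 0 < k) (hε : 0 ≤ ε) (hδ_pos : 0 < δ) (hδ : δ ≤ k ^ 2 * Real.sin ε / 8)
    (hp : 0 ≤ p) (hy : y ∈ closedBall x r \ closedBall x (k * r))
    (hz : z ∈ closedBall x r \ closedBall x (k * r)) (hzy : z ∉ cone (y - x) ε x) :
    (ENNReal.ofReal δ / ENNReal.ofReal (2 * r)) ^ p * ν (closedBall x (δ * r)) ≤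
      ∫⁻ a, kappa a y z ^ p ∂ν := by
  rw [← setLIntegral_const]
  refine (setLIntegral_mono' measurableSet_closedBall fun a ha => ?_).trans
    (setLIntegral_le_lintegral _ _)
  exact ENNReal.rpow_le_rpow (ofReal_div_le_kappa hr hk hε hδ_pos hδ ha hy hz hzy) hp

lemma mul_le_setLIntegral_pointwiseMengerCurvature {δ k : ℝ} {m : ℝ≥0∞} (hr : 0 < r) (hk : 0 < k)
    (hε : 0 ≤ ε) (hδ_pos : 0 < δ) (hδ : δ ≤ k ^ 2 * Real.sin ε / 8) (hp : 0 ≤ p)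
    (hfin : ν (closedBall x r) ≠ ⊤)
    (hm : ∀ y ∈ closedBall x r \ closedBall x (k * r),
      m ≤ ν ((closedBall x r \ closedBall x (k * r)) \ cone (y - x) ε x)) :
    (ENNReal.ofReal δ / ENNReal.ofReal (2 * r)) ^ p * ν (closedBall x (δ * r)) *
        (m * ν (closedBall x r \ closedBall x (k * r))) ≤
      ∫⁻ z in closedBall x r, pointwiseMengerCurvature p ν z ∂ν := by
  set A := closedBall x r \ closedBall x (k * r)
  set μ := ν.restrict (closedBall x r) with hμ
  have : IsFiniteMeasure μ := isFiniteMeasure_restrict.mpr hfin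
  have hA : MeasurableSet A := measurableSet_closedBall.diff measurableSet_closedBall
  let S := (A ×ˢ A) \ {q | q.1 ∈ cone (q.2 - x) ε x}
  have hS : MeasurableSet S := (hA.prod hA).diff <|
    (measurableSet_mem_cone x ε).preimage
      (measurable_fst.prodMk (measurable_snd.sub_const x))
  have section_mass : ∀ y ∈ A, m ≤ μ ((fun z => (z, y)) ⁻¹' S) := fun y hy => by
    have : (fun z => (z, y)) ⁻¹' S = A \ cone (y - x) ε x := by
      ext z
      simp [S, hy]
    rw [this, hμ, Measure.restrict_eq_self _ (sdiff_subset.trans sdiff_subset)]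
    exact hm y hy
  calc _ = (ENNReal.ofReal δ / ENNReal.ofReal (2 * r)) ^ p * ν (closedBall x (δ * r)) *
          (m * μ A) := by rw [hμ, Measure.restrict_eq_self _ sdiff_subset]
    _ ≤ (ENNReal.ofReal δ / ENNReal.ofReal (2 * r)) ^ p * ν (closedBall x (δ * r)) *
          μ.prod μ S := by
        gcongr
        exact mul_measure_le_measure_prod hS hA section_mass
    _ ≤ ∫⁻ z, ∫⁻ y, ∫⁻ a, kappa a y z ^ p ∂ν ∂μ ∂μ :=
        mul_measure_prod_le_lintegral_lintegral hS fun z y ⟨⟨hz, hy⟩, hzy⟩ =>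
          mul_measure_closedBall_le_lintegral_kappa_rpow hr hk hε hδ_pos hδ hp hy hz hzy
    _ ≤ ∫⁻ z, pointwiseMengerCurvature p ν z ∂μ :=
        lintegral_mono fun z => lintegral_mono' Measure.restrict_le_self le_rfl

lemma le_measure_annulus_diff_cone {t : ℝ} {y : EuclideanSpace ℝ (Fin n)} (ht : 0 ≤ t)
    (hnot : ¬ ∃ s, IsTangentAtScale ν α x ε r s)
    (hsmall : ν (closedBall x (t)) ≤ ENNReal.ofReal ε * ENNReal.ofReal (2 * r) ^ α / 2)
    (hy : y ∉ closedBall x (t)) :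
    ENNReal.ofReal ε * ENNReal.ofReal (2 * r) ^ α / 2 ≤
      ν ((closedBall x r \ closedBall x (t)) \ cone (y - x) ε x) := by
  have hyx : y - x ≠ 0 := sub_ne_zero.mpr fun h => hy (h ▸ mem_closedBall_self ht)
  have outside_lt : ENNReal.ofReal ε * ENNReal.ofReal (2 * r) ^ α <
      ν (closedBall x r \ cone (y - x) ε x) := by
    by_contra! hle
    refine hnot ⟨‖y - x‖⁻¹ • (y - x), norm_smul_inv_norm (𝕜 := ℝ) hyx, ?_⟩
    rwa [cone_smul_of_pos (inv_pos.mpr (norm_pos_iff.mpr hyx))]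
  rw [sdiff_sdiff_comm]
  exact half_le_measure_diff outside_lt.ne_top outside_lt.le hsmall

lemma exists_isTangentAtScale_of_setLIntegral_lt {δ k : ℝ} {c : ℝ≥0∞} (hr : 0 < r)
    (hr_le : 2 * r ≤ 1) (hk : 0 < k) (hε : 0 ≤ ε) (hδ_pos : 0 < δ)
    (hδ : δ ≤ k ^ 2 * Real.sin ε / 8) (hα : 0 ≤ α) (hp : 3 * α ≤ p) (hc : c ≠ ⊤)
    (hfin : ν (closedBall x r) ≠ ⊤)
    (hlow : c * ENNReal.ofReal (2 * r) ^ α ≤ ν (closedBall x r))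
    (hlow_δ : c * ENNReal.ofReal (2 * (δ * r)) ^ α ≤ ν (closedBall x (δ * r)))
    (hup_k : ν (closedBall x (k * r)) ≤
      min c (ENNReal.ofReal ε) / 2 * ENNReal.ofReal (2 * r) ^ α)
    (henergy : ∫⁻ z in closedBall x r, pointwiseMengerCurvature p ν z ∂ν <
      ENNReal.ofReal δ ^ p * (c * ENNReal.ofReal δ ^ α) * (ENNReal.ofReal ε / 2 * (c / 2))) :
    ∃ s, IsTangentAtScale ν α x ε r s := by
  set R := ENNReal.ofReal (2 * r) with hR
  have hR_ne : R ≠ 0 := (ENNReal.ofReal_pos.mpr (by positivity)).ne'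
  have hR_le : R ≤ 1 := ENNReal.ofReal_le_one.mpr hr_le
  have hRα_top : R ^ α ≠ ⊤ := ENNReal.rpow_ne_top_of_nonneg hα ENNReal.ofReal_ne_top
  by_contra hnot
  have annulus_mass : c * R ^ α / 2 ≤ ν (closedBall x r \ closedBall x (k * r)) := by
    refine half_le_measure_diff (ENNReal.mul_ne_top hc hRα_top) hlow (hup_k.trans ?_)
    rw [ENNReal.mul_div_right_comm]
    gcongr
    exact min_le_left _ _
  have section_mass (y) (hy : y ∈ closedBall x r \ closedBall x (k * r)) :=
    le_measure_annulus_diff_cone (by positivity : 0 ≤ k * r) hnot (hup_k.trans (by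
      rw [ENNReal.mul_div_right_comm]
      gcongr
      exact min_le_right _ _)) hy.2
  refine henergy.not_ge ?_
  calc ENNReal.ofReal δ ^ p * (c * ENNReal.ofReal δ ^ α) * (ENNReal.ofReal ε / 2 * (c / 2))
      ≤ ENNReal.ofReal δ ^ p * (c * ENNReal.ofReal δ ^ α) * (ENNReal.ofReal ε / 2 * (c / 2)) *
          (R ^ α * R ^ α * R ^ α * (R ^ p)⁻¹) :=
        le_mul_of_one_le_right' (one_le_rpow_mul_inv_rpow hR_ne hR_le hp)
    _ = (ENNReal.ofReal δ / R) ^ p * (c * ENNReal.ofReal (2 * (δ * r)) ^ α) *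
          (ENNReal.ofReal ε * R ^ α / 2 * (c * R ^ α / 2)) := by
        rw [ENNReal.div_rpow_of_nonneg _ _ (by linarith), ofReal_two_mul_mul_rpow hδ_pos.le hα]
        simp only [div_eq_mul_inv, ← hR]
        ring
    _ ≤ (ENNReal.ofReal δ / R) ^ p * ν (closedBall x (δ * r)) *
          (ENNReal.ofReal ε * R ^ α / 2 * ν (closedBall x r \ closedBall x (k * r))) := by gcongr
    _ ≤ ∫⁻ z in closedBall x r, pointwiseMengerCurvature p ν z ∂ν :=
        mul_le_setLIntegral_pointwiseMengerCurvature hr hk hε hδ_pos hδ (by linarith) hfin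
          section_mass

lemma eventually_exists_isTangentAtScale {c C : ℝ≥0∞} (hα : 0 < α) (hp : 3 * α ≤ p)
    (hc_pos : 0 < c) (hc : c ≠ ⊤) (hC : C ≠ ⊤)
    (hlow : ∀ᶠ r in 𝓝[>] 0, c * ENNReal.ofReal (2 * r) ^ α ≤ ν (closedBall x r))
    (hup : ∀ᶠ r in 𝓝[>] 0, ν (closedBall x r) ≤ C * ENNReal.ofReal (2 * r) ^ α)
    (henergy : ∫⁻ z, pointwiseMengerCurvature p ν z ∂ν ≠ ⊤) (hε : 0 < ε) (hεπ : ε < Real.pi) :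
    ∀ᶠ r in 𝓝[>] 0, ∃ s, IsTangentAtScale ν α x ε r s := by
  have hε_pos : 0 < ENNReal.ofReal ε := ENNReal.ofReal_pos.mpr hε
  obtain ⟨k, hk, hkC⟩ := exists_pos_const_mul_ofReal_rpow_le hC
    (ENNReal.half_pos (lt_min hc_pos hε_pos).ne') hα
  have hsin : 0 < Real.sin ε := Real.sin_pos_of_pos_of_lt_pi hε hεπ
  obtain ⟨δ, hδ⟩ : ∃ δ, δ = k ^ 2 * Real.sin ε / 8 := ⟨_, rfl⟩
  have hδ_pos : 0 < δ := by rw [hδ]; positivity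
  have threshold_pos : 0 < ENNReal.ofReal δ ^ p * (c * ENNReal.ofReal δ ^ α) *
      (ENNReal.ofReal ε / 2 * (c / 2)) := by
    have : 0 < ENNReal.ofReal δ := ENNReal.ofReal_pos.mpr hδ_pos
    have hδp := ENNReal.rpow_pos (p := p) this ENNReal.ofReal_ne_top
    have hδα := ENNReal.rpow_pos (p := α) this ENNReal.ofReal_ne_top
    simp [pos_iff_ne_zero, hδp.ne', hδα.ne', hc_pos.ne', hε]
  filter_upwards [hlow, eventually_nhdsGT_zero_mul_left hδ_pos hlow, hup,
    eventually_nhdsGT_zero_mul_left hk hup,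
    (tendsto_setLIntegral_closedBall_zero hα hC hup henergy).eventually_lt_const threshold_pos,
    Ioo_mem_nhdsGT (show (0 : ℝ) < 1 / 2 by norm_num)]
    with r hlow_r hlow_δ hup_r hup_k henergy_r ⟨hr, hr_lt⟩
  refine exists_isTangentAtScale_of_setLIntegral_lt hr (by linarith) hk hε.le hδ_pos hδ.le hα.le
    hp hc (ne_top_of_le_ne_top ?_ hup_r) hlow_r hlow_δ (hup_k.trans ?_) henergy_r
  · exact ENNReal.mul_ne_top hC (ENNReal.rpow_ne_top_of_nonneg hα.le ENNReal.ofReal_ne_top)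
  · rw [ofReal_two_mul_mul_rpow hk.le hα.le, ← mul_assoc]
    gcongr

lemma tendsto_measure_diff_cone_div_of_forall_eventually {s : ℝ → EuclideanSpace ℝ (Fin n)}
    (hs : ∀ ε > 0, ∀ᶠ r in 𝓝[>] 0, IsTangentAtScale ν α x ε r (s r)) (hε : 0 < ε) :
    Tendsto (fun r => ν (closedBall x r \ cone (s r) ε x) / ENNReal.ofReal (2 * r) ^ α)
      (𝓝[>] 0) (𝓝 0) := by
  refine ENNReal.tendsto_nhds_zero.mpr fun t ht => ?_
  obtain ⟨e, he, het⟩ : ∃ e : ℝ, 0 < e ∧ ENNReal.ofReal e ≤ t := by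
    obtain ⟨q, -, hq_pos, hqt⟩ := ENNReal.lt_iff_exists_real_btwn.mp ht
    exact ⟨q, ENNReal.ofReal_pos.mp hq_pos, hqt.le⟩
  filter_upwards [hs (min ε e) (lt_min hε he)] with r ⟨_, hmass⟩
  refine ENNReal.div_le_of_le_mul ?_
  calc ν (closedBall x r \ cone (s r) ε x)
      ≤ ν (closedBall x r \ cone (s r) (min ε e) x) :=
        measure_mono (sdiff_subset_sdiff_right (cone_mono _ _ (min_le_left _ _)))
    _ ≤ ENNReal.ofReal (min ε e) * ENNReal.ofReal (2 * r) ^ α := hmass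
    _ ≤ t * ENNReal.ofReal (2 * r) ^ α := by
        gcongr
        exact (ENNReal.ofReal_le_ofReal (min_le_right _ _)).trans het

theorem finite_energyM_implies_weak_approx_tangent_general (hα : 0 < α) (hp : 3 * α ≤ p)
    (hlower : 0 < liminf (fun r => ν (closedBall x r) / ENNReal.ofReal (2 * r) ^ α) (𝓝[>] 0))
    (hupper : limsup (fun r => ν (closedBall x r) / ENNReal.ofReal (2 * r) ^ α) (𝓝[>] 0) < ⊤)
    (henergy : ∫⁻ z, ∫⁻ y, ∫⁻ a, kappa a y z ^ p ∂ν ∂ν ∂ν ≠ ⊤) :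
    ∃ ρ > (0 : ℝ), ∃ s : ℝ → EuclideanSpace ℝ (Fin n), (∀ r ∈ Ioo 0 ρ, ‖s r‖ = 1) ∧
      ∀ ε > 0, Tendsto
        (fun r => ν (closedBall x r \ cone (s r) ε x) / ENNReal.ofReal (2 * r) ^ α)
        (𝓝[>] 0) (𝓝 0) := by
  obtain ⟨c, hc_pos, hc, hlow⟩ := exists_eventually_mul_le_of_liminf_pos hlower
  obtain ⟨C, hC, hup⟩ := exists_eventually_le_mul_of_limsup_lt_top hupper
  have exists_direction : ∀ ε > 0, ∀ᶠ r in 𝓝[>] 0, ∃ s, IsTangentAtScale ν α x ε r s := by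
    intro ε hε
    filter_upwards [eventually_exists_isTangentAtScale hα hp hc_pos hc hC hlow hup henergy
      (lt_min hε one_pos) ((min_le_right ε 1).trans_lt (by linarith [Real.pi_gt_three]))]
      with r ⟨s, hs⟩
    exact ⟨s, IsTangentAtScale.monotone ν α x r s (min_le_left _ _) hs⟩
  obtain ⟨s, hs⟩ := exists_forall_eventually_of_forall_eventually_exists tendsto_id
    (fun r s => IsTangentAtScale.monotone ν α x r s) exists_direction
  obtain ⟨ρ, hρ, hunit⟩ := mem_nhdsGT_iff_exists_Ioo_subset.mp (hs 1 one_pos)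
  exact ⟨ρ, hρ, s, fun r hr => (hunit hr).1,
    fun ε hε => tendsto_measure_diff_cone_div_of_forall_eventually hs hε⟩

end Tangent

section Restriction

variable {n : ℕ} (α : ℝ) (X : Set (EuclideanSpace ℝ (Fin n))) (x : EuclideanSpace ℝ (Fin n))

lemma lowerDensity_eq_liminf_restrict :
    lowerDensity α X x = liminf
      (fun r => μH[α].restrict X (closedBall x r) / ENNReal.ofReal (2 * r) ^ α) (𝓝[>] 0) := by
  simp only [lowerDensity, Measure.restrict_apply measurableSet_closedBall, inter_comm X]

lemma upperDensity_eq_limsup_restrict :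
    upperDensity α X x = limsup
      (fun r => μH[α].restrict X (closedBall x r) / ENNReal.ofReal (2 * r) ^ α) (𝓝[>] 0) := by
  simp only [upperDensity, Measure.restrict_apply measurableSet_closedBall, inter_comm X]

lemma hasWeakApproxTangent_iff_restrict :
    HasWeakApproxTangent α X x ↔
      ∃ ρ > (0 : ℝ), ∃ s : ℝ → EuclideanSpace ℝ (Fin n), (∀ r ∈ Ioo 0 ρ, ‖s r‖ = 1) ∧
        ∀ ε > 0, Tendsto
          (fun r => μH[α].restrict X (closedBall x r \ cone (s r) ε x) /
            ENNReal.ofReal (2 * r) ^ α) (𝓝[>] 0) (𝓝 0) := by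
  have restrict_apply (s : EuclideanSpace ℝ (Fin n)) (ε r : ℝ) :
      μH[α].restrict X (closedBall x r \ cone s ε x) =
        μH[α] ((X \ cone s ε x) ∩ closedBall x r) := by
    rw [Measure.restrict_apply (measurableSet_closedBall.diff (measurableSet_cone s)), inter_comm,
      ← inter_sdiff_assoc, inter_sdiff_right_comm]
  simp only [HasWeakApproxTangent, restrict_apply]

end Restriction

theorem finite_energyM_implies_weak_approx_tangent (n : ℕ) (X : Set (EuclideanSpace ℝ (Fin n)))
    (α p : ℝ) (hα : α ∈ Set.Ioi (0 : ℝ)) (hp : p ∈ Set.Ici (3 * α))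
    (x : EuclideanSpace ℝ (Fin n))
    (hd1 : 0 < lowerDensity α X x)
    (hd2 : lowerDensity α X x ≤ upperDensity α X x)
    (hd3 : upperDensity α X x < ⊤)
    (hE : energyM p α X < ⊤) :
    HasWeakApproxTangent α X x :=
  (hasWeakApproxTangent_iff_restrict α X x).mpr <|
    finite_energyM_implies_weak_approx_tangent_general hα hp
      (lowerDensity_eq_liminf_restrict α X x ▸ hd1)
      (upperDensity_eq_limsup_restrict α X x ▸ hd3) hE.ne

end
end

section
/- Let E = ([−1,1]×{0}) ∪ ({0}×[0,1]) ⊂ ℝ². For every p ∈ (0,2) one has I_p^1(E) < ∞. -/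
open MeasureTheory Metric Set Filter
open scoped ENNReal Topology Classical

noncomputable section

/-- The T-shaped set `E = ([-1,1] × {0}) ∪ ({0} × [0,1])` in `ℝ²`. -/
def Eset : Set (EuclideanSpace ℝ (Fin 2)) :=
  {p | p 1 = 0 ∧ p 0 ∈ Set.Icc (-1 : ℝ) 1} ∪ {p | p 0 = 0 ∧ p 1 ∈ Set.Icc (0 : ℝ) 1}

/-!
The set `E` lies on finitely many lines through the origin, and distinct such lines are uniformly
transverse: `‖x‖ ≤ K * ‖x - y‖` whenever `x` and `y` lie on different ones. This forces
`κ(x, y, z) ≤ C / ‖x‖` for all `x`, `y`, `z` on the lines.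

* If `x` and `y` lie on different lines, the triangle inequality alone gives
  `κ(x, y, z) ≤ 4 / ‖x - y‖`, and `‖x - y‖` is at least `‖x‖ / K`.
* If `x` and `y` share a line not containing `z`, that line passes through `0`, so
  `dist(z, L_{x,y}) ≤ ‖z‖ ≤ K * ‖z - y‖`, and again `‖x - z‖` is at least `‖x‖ / K`.
* If all three points share a line, `κ(x, y, z) = 0`.

By symmetry `κ_i(x, y) ≤ C / ‖y‖` as well, and multiplying the square roots of the two bounds
separates the variables: `κ_i(x, y) ^ p ≤ C ^ p * ‖x‖ ^ (-p / 2) * ‖y‖ ^ (-p / 2)`. The energy is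
therefore at most a constant times the square of the integral of `‖x‖ ^ (-p / 2)`, which is finite
near `0` on a line exactly because `p / 2 < 1`.
-/

open scoped NNReal

/-- `TransverseWith K L M` is the quantitative form of `L ⊓ M = ⊥`: a point of `L` is at distance
at least `K⁻¹` times its norm from `M`. -/
def TransverseWith {E : Type*} [NormedAddCommGroup E] [Module ℝ E] (K : ℝ≥0)
    (L M : Submodule ℝ E) : Prop :=
  ∀ x ∈ L, ∀ y ∈ M, ‖x‖ ≤ K * ‖x - y‖

section Transversality

variable {E : Type*} [NormedAddCommGroup E] [NormedSpace ℝ E]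

theorem eventually_transverseWith_of_disjoint {L M : Submodule ℝ E} [FiniteDimensional ℝ L]
    [FiniteDimensional ℝ M] (h : Disjoint L M) : ∀ᶠ K in atTop, TransverseWith K L M := by
  let diff : L × M →ₗ[ℝ] E := L.subtype.coprod (-M.subtype)
  have diff_ker : LinearMap.ker diff = ⊥ := by
    refine LinearMap.ker_eq_bot'.2 fun ⟨x, y⟩ hxy ↦ ?_
    have hxy : (x : E) = y := sub_eq_zero.1 (by simpa [diff, sub_eq_add_neg] using hxy)
    have hx : (x : E) = 0 := Submodule.disjoint_def.1 h x x.2 (hxy ▸ y.2)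
    exact Prod.ext (Subtype.ext hx) (Subtype.ext (hxy ▸ hx))
  obtain ⟨K₀, -, hK₀⟩ := diff.exists_antilipschitzWith diff_ker
  filter_upwards [eventually_ge_atTop K₀] with K hK x hx y hy
  calc ‖x‖ ≤ ‖((⟨x, hx⟩, ⟨y, hy⟩) : L × M)‖ := le_max_left _ _
    _ ≤ K₀ * ‖diff (⟨x, hx⟩, ⟨y, hy⟩)‖ := ZeroHomClass.bound_of_antilipschitz diff hK₀ _
    _ = K₀ * ‖x - y‖ := by simp [diff, sub_eq_add_neg]
    _ ≤ K * ‖x - y‖ := by gcongr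

theorem exists_pairwise_transverseWith {𝓛 : Set (Submodule ℝ E)} (hfin : 𝓛.Finite)
    (hdim : ∀ L ∈ 𝓛, FiniteDimensional ℝ L) (hdisj : 𝓛.Pairwise Disjoint) :
    ∃ K, 𝓛.Pairwise (TransverseWith K) := by
  have h : ∀ᶠ K in atTop, ∀ L ∈ 𝓛, ∀ M ∈ 𝓛, L ≠ M → TransverseWith K L M := by
    refine (eventually_all_finite hfin).2 fun L hL ↦ (eventually_all_finite hfin).2 fun M hM ↦ ?_
    refine eventually_imp_distrib_left.2 fun hLM ↦ ?_
    have := hdim L hL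
    have := hdim M hM
    exact eventually_transverseWith_of_disjoint (hdisj hL hM hLM)
  obtain ⟨K, hK⟩ := h.exists
  exact ⟨K, fun L hL M hM ↦ hK L hL M hM⟩

end Transversality

section Curvature

variable {n : ℕ} {x y z : EuclideanSpace ℝ (Fin n)} {X : Set (EuclideanSpace ℝ (Fin n))}
  {K : ℝ≥0} {L M : Submodule ℝ (EuclideanSpace ℝ (Fin n))}
  {𝓛 : Set (Submodule ℝ (EuclideanSpace ℝ (Fin n)))}

theorem lineThrough_comm (x y : EuclideanSpace ℝ (Fin n)) : lineThrough x y = lineThrough y x := by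
  have subset (x y : EuclideanSpace ℝ (Fin n)) : lineThrough x y ⊆ lineThrough y x := by
    rintro _ ⟨t, rfl⟩
    exact ⟨1 - t, by module⟩
  exact (subset x y).antisymm (subset y x)

theorem kappa_comm (x y z : EuclideanSpace ℝ (Fin n)) : kappa x y z = kappa y x z := by
  have distinct_iff : (x ≠ y ∧ y ≠ z ∧ x ≠ z) ↔ (y ≠ x ∧ x ≠ z ∧ y ≠ z) := by tauto
  simp only [kappa, distinct_iff, lineThrough_comm x y, mul_comm ‖x - z‖]

theorem kappaI_comm (X : Set (EuclideanSpace ℝ (Fin n))) (x y : EuclideanSpace ℝ (Fin n)) :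
    kappaI X x y = kappaI X y x := by
  simp only [kappaI, kappa_comm x y]

theorem infDist_lineThrough_le_left (x y z : EuclideanSpace ℝ (Fin n)) :
    infDist z (lineThrough x y) ≤ ‖x - z‖ := by
  rw [norm_sub_rev, ← dist_eq_norm]
  exact infDist_le_dist_of_mem ⟨0, by simp⟩

theorem infDist_lineThrough_le_right (x y z : EuclideanSpace ℝ (Fin n)) :
    infDist z (lineThrough x y) ≤ ‖y - z‖ :=
  lineThrough_comm x y ▸ infDist_lineThrough_le_left y x z

theorem infDist_lineThrough_mul_norm_sub_le (x y z : EuclideanSpace ℝ (Fin n)) :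
    infDist z (lineThrough x y) * ‖x - y‖ ≤ 2 * (‖x - z‖ * ‖y - z‖) :=
  calc infDist z (lineThrough x y) * ‖x - y‖
      ≤ infDist z (lineThrough x y) * (‖x - z‖ + ‖y - z‖) := by
        gcongr
        · exact infDist_nonneg
        · exact norm_sub_rev y z ▸ norm_sub_le_norm_sub_add_norm_sub x z y
    _ = infDist z (lineThrough x y) * ‖x - z‖ + infDist z (lineThrough x y) * ‖y - z‖ := mul_add ..
    _ ≤ ‖y - z‖ * ‖x - z‖ + ‖x - z‖ * ‖y - z‖ := by
        gcongr
        · exact infDist_lineThrough_le_right x y z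
        · exact infDist_lineThrough_le_left x y z
    _ = 2 * (‖x - z‖ * ‖y - z‖) := by ring

theorem subset_lineThrough_of_finrank_eq_one (hL : Module.finrank ℝ L = 1) (hx : x ∈ L)
    (hy : y ∈ L) (hxy : x ≠ y) : (L : Set (EuclideanSpace ℝ (Fin n))) ⊆ lineThrough x y := by
  intro z hz
  have direction_ne_zero : (⟨y - x, L.sub_mem hy hx⟩ : L) ≠ 0 := by
    simpa [Subtype.ext_iff, sub_eq_zero] using hxy.symm
  obtain ⟨t, ht⟩ :=
    (finrank_eq_one_iff_of_nonzero' _ direction_ne_zero).1 hL ⟨z - x, L.sub_mem hz hx⟩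
  exact ⟨t, eq_add_of_sub_eq' (congrArg Subtype.val ht).symm⟩

theorem infDist_lineThrough_mul_norm_le_of_transverseWith (hLM : TransverseWith K L M)
    (hx : x ∈ L) (hy : y ∈ M) (z : EuclideanSpace ℝ (Fin n)) :
    infDist z (lineThrough x y) * ‖x‖ ≤ 2 * K * (‖x - z‖ * ‖y - z‖) :=
  calc infDist z (lineThrough x y) * ‖x‖
      ≤ infDist z (lineThrough x y) * (K * ‖x - y‖) :=
        mul_le_mul_of_nonneg_left (hLM x hx y hy) infDist_nonneg
    _ = K * (infDist z (lineThrough x y) * ‖x - y‖) := by ring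
    _ ≤ K * (2 * (‖x - z‖ * ‖y - z‖)) :=
        mul_le_mul_of_nonneg_left (infDist_lineThrough_mul_norm_sub_le x y z) K.2
    _ = 2 * K * (‖x - z‖ * ‖y - z‖) := by ring

theorem infDist_lineThrough_mul_norm_le_of_finrank_eq_one (hL : Module.finrank ℝ L = 1)
    (hLM : TransverseWith K L M) (hML : TransverseWith K M L) (hx : x ∈ L) (hy : y ∈ L)
    (hxy : x ≠ y) (hz : z ∈ M) :
    infDist z (lineThrough x y) * ‖x‖ ≤ K ^ 2 * (‖x - z‖ * ‖y - z‖) := by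
  have zero_mem : 0 ∈ lineThrough x y :=
    subset_lineThrough_of_finrank_eq_one hL hx hy hxy L.zero_mem
  calc infDist z (lineThrough x y) * ‖x‖ ≤ ‖z‖ * ‖x‖ := by
        gcongr
        simpa using infDist_le_dist_of_mem (x := z) zero_mem
    _ ≤ (K * ‖z - y‖) * (K * ‖x - z‖) := by
        gcongr
        · exact hML z hz y hy
        · exact hLM x hx z hz
    _ = K ^ 2 * (‖x - z‖ * ‖y - z‖) := by rw [norm_sub_rev z y]; ring

theorem infDist_lineThrough_mul_norm_le (hdim : ∀ L ∈ 𝓛, Module.finrank ℝ L = 1)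
    (hK : 𝓛.Pairwise (TransverseWith K)) (hx : x ∈ ⋃ L ∈ 𝓛, (L : Set _))
    (hy : y ∈ ⋃ L ∈ 𝓛, (L : Set _)) (hz : z ∈ ⋃ L ∈ 𝓛, (L : Set _)) (hxy : x ≠ y) :
    infDist z (lineThrough x y) * ‖x‖ ≤ (K + 1) ^ 2 * (‖x - z‖ * ‖y - z‖) := by
  simp only [mem_iUnion₂, SetLike.mem_coe] at hx hy hz
  obtain ⟨L, hL, hxL⟩ := hx
  obtain ⟨M, hM, hyM⟩ := hy
  obtain ⟨N, hN, hzN⟩ := hz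
  rcases ne_or_eq L M with hLM | rfl
  · refine (infDist_lineThrough_mul_norm_le_of_transverseWith (hK hL hM hLM) hxL hyM z).trans ?_
    gcongr
    nlinarith [sq_nonneg (K : ℝ)]
  rcases ne_or_eq L N with hLN | rfl
  · refine (infDist_lineThrough_mul_norm_le_of_finrank_eq_one (hdim L hL) (hK hL hN hLN)
      (hK hN hL hLN.symm) hxL hyM hxy hzN).trans ?_
    gcongr
    simp
  · have hz_line : z ∈ lineThrough x y :=
      subset_lineThrough_of_finrank_eq_one (hdim L hL) hxL hyM hxy hzN
    rw [infDist_zero_of_mem hz_line, zero_mul]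
    positivity

theorem kappa_le_ofReal_div_enorm {C : ℝ} (hC : 0 < C)
    (h : x ≠ y → infDist z (lineThrough x y) * ‖x‖ ≤ C * (‖x - z‖ * ‖y - z‖)) :
    kappa x y z ≤ ENNReal.ofReal (2 * C) / ‖x‖ₑ := by
  rw [ENNReal.le_div_iff_mul_le (.inr (by simpa using hC)) (.inl enorm_ne_top), kappa]
  split_ifs with hdist
  · obtain ⟨hxy, hyz, hxz⟩ := hdist
    have hxz_pos := norm_pos_iff.2 (sub_ne_zero.2 hxz)
    have hyz_pos := norm_pos_iff.2 (sub_ne_zero.2 hyz)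
    rw [← ofReal_norm, ← ENNReal.ofReal_mul' (norm_nonneg x)]
    refine ENNReal.ofReal_le_ofReal ?_
    rw [div_mul_eq_mul_div, div_le_iff₀ (by positivity)]
    linarith [h hxy]
  · simp

theorem kappaI_le_ofReal_div_enorm (hdim : ∀ L ∈ 𝓛, Module.finrank ℝ L = 1)
    (hK : 𝓛.Pairwise (TransverseWith K)) (hX : X ⊆ ⋃ L ∈ 𝓛, (L : Set _)) (hx : x ∈ X)
    (hy : y ∈ X) : kappaI X x y ≤ ENNReal.ofReal (2 * (K + 1) ^ 2) / ‖x‖ₑ :=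
  iSup₂_le fun _ hz ↦ kappa_le_ofReal_div_enorm (by positivity) <|
    infDist_lineThrough_mul_norm_le hdim hK (hX hx) (hX hy) (hX hz)

theorem energyI_le_sq_lintegral {f : EuclideanSpace ℝ (Fin n) → ℝ≥0∞} (hf : Measurable f)
    (hκ : ∀ x ∈ X, ∀ y ∈ X, kappaI X x y ≤ f x) {p : ℝ} (hp : 0 ≤ p) (α : ℝ) :
    energyI p α X ≤ (∫⁻ x in X, f x ^ (p / 2) ∂μH[α]) ^ 2 := by
  have hfp : Measurable fun x ↦ f x ^ (p / 2) := hf.pow_const _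
  have hκp (x) (hx : x ∈ X) (y) (hy : y ∈ X) :
      kappaI X x y ^ p ≤ f x ^ (p / 2) * f y ^ (p / 2) :=
    calc kappaI X x y ^ p = kappaI X x y ^ (p / 2) * kappaI X x y ^ (p / 2) := by
          rw [← ENNReal.rpow_add_of_nonneg _ _ (by positivity) (by positivity), add_halves]
      _ ≤ f x ^ (p / 2) * f y ^ (p / 2) := by
          gcongr
          · exact hκ x hx y hy
          · exact kappaI_comm X x y ▸ hκ y hy x hx
  calc energyI p α X
      ≤ ∫⁻ y in X, ∫⁻ x in X, f x ^ (p / 2) * f y ^ (p / 2) ∂μH[α] ∂μH[α] :=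
        setLIntegral_mono (by simp only [lintegral_mul_const _ hfp]; fun_prop) fun y hy ↦
          setLIntegral_mono (hfp.mul_const _) fun x hx ↦ hκp x hx y hy
    _ = (∫⁻ x in X, f x ^ (p / 2) ∂μH[α]) ^ 2 := by
        simp only [lintegral_mul_const _ hfp, lintegral_const_mul _ hfp, sq]

end Curvature

section Integrability

variable {E : Type*} [NormedAddCommGroup E] [NormedSpace ℝ E] [MeasurableSpace E] [BorelSpace E]

theorem setLIntegral_ball_enorm_rpow_neg_lt_top [FiniteDimensional ℝ E] [Nontrivial E]
    (μ : Measure E) [μ.IsAddHaarMeasure] {q : ℝ} (hq : q < Module.finrank ℝ E) (r : ℝ) :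
    ∫⁻ x in ball 0 r, ‖x‖ₑ ^ (-q) ∂μ < ⊤ := by
  have hint : IntegrableOn (fun x : E ↦ ‖x‖ ^ (-q)) (ball 0 r) μ :=
    integrableOn_ball_of_norm_le_rpow Module.finrank_pos (C := 1) hq
      (.of_forall fun x ↦ by simp [abs_of_nonneg (Real.rpow_nonneg (norm_nonneg x) _)])
      (measurable_norm.pow_const _).aestronglyMeasurable
  have hae : ∀ᵐ x ∂μ.restrict (ball 0 r), ‖x‖ₑ ^ (-q) = ‖‖x‖ ^ (-q)‖ₑ := by
    filter_upwards [ae_restrict_of_ae (Measure.ae_ne μ (0 : E))] with x hx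
    rw [Real.enorm_of_nonneg (by positivity), ← ENNReal.ofReal_rpow_of_pos (norm_pos_iff.2 hx),
      ofReal_norm]
  exact lintegral_congr_ae hae ▸ hint.hasFiniteIntegral

theorem setLIntegral_submodule_inter_ball_enorm_rpow_neg_lt_top (L : Submodule ℝ E)
    [FiniteDimensional ℝ L] [Nontrivial L] {q : ℝ} (hq : q < Module.finrank ℝ L) (r : ℝ) :
    ∫⁻ x in (L : Set E) ∩ ball 0 r, ‖x‖ₑ ^ (-q) ∂μH[Module.finrank ℝ L] < ⊤ := by
  have hemb : MeasurableEmbedding ((↑) : L → E) :=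
    MeasurableEmbedding.subtype_coe L.closed_of_finiteDimensional.measurableSet
  have hmap : Measure.map ((↑) : L → E) μH[Module.finrank ℝ L]
      = (μH[Module.finrank ℝ L]).restrict L := by
    simpa using L.subtypeₗᵢ.isometry.map_hausdorffMeasure (.inl (by positivity))
  have hball : ((↑) : L → E) ⁻¹' ball 0 r = ball 0 r := by ext; simp
  rw [inter_comm, ← Measure.restrict_restrict measurableSet_ball, ← hmap, hemb.restrict_map,
    hemb.lintegral_map, hball]
  exact setLIntegral_ball_enorm_rpow_neg_lt_top μH[Module.finrank ℝ L] hq r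

theorem setLIntegral_biUnion_lt_top_of_finite {α ι : Type*} [MeasurableSpace α] {μ : Measure α}
    {f : α → ℝ≥0∞} {t : Set ι} {s : ι → Set α} (ht : t.Finite)
    (h : ∀ i ∈ t, ∫⁻ x in s i, f x ∂μ < ⊤) : ∫⁻ x in ⋃ i ∈ t, s i, f x ∂μ < ⊤ := by
  have := ht.fintype
  rw [biUnion_eq_iUnion]
  refine (lintegral_iUnion_le _ _).trans_lt ?_
  rw [tsum_fintype]
  exact ENNReal.sum_lt_top.2 fun i _ ↦ h i i.2

theorem setLIntegral_enorm_rpow_neg_lt_top_of_subset_biUnion_submodule {X : Set E}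
    {𝓛 : Set (Submodule ℝ E)} {d : ℕ} (hd : 0 < d) (hfin : 𝓛.Finite)
    (hdim : ∀ L ∈ 𝓛, Module.finrank ℝ L = d) (hX : X ⊆ ⋃ L ∈ 𝓛, (L : Set E))
    (hbdd : Bornology.IsBounded X) {q : ℝ} (hq : q < d) :
    ∫⁻ x in X, ‖x‖ₑ ^ (-q) ∂μH[d] < ⊤ := by
  obtain ⟨r, hr⟩ := hbdd.subset_ball 0
  have hX_ball : X ⊆ ⋃ L ∈ 𝓛, (L : Set E) ∩ ball 0 r := by
    rw [← iUnion₂_inter]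
    exact subset_inter hX hr
  refine (lintegral_mono_set hX_ball).trans_lt
    (setLIntegral_biUnion_lt_top_of_finite hfin fun L hL ↦ ?_)
  obtain rfl := hdim L hL
  have := Module.nontrivial_of_finrank_pos hd
  have := Module.finite_of_finrank_pos hd
  exact setLIntegral_submodule_inter_ball_enorm_rpow_neg_lt_top L hq r

end Integrability

theorem Eset_energyI_lt_top_all_general {n : ℕ} {X : Set (EuclideanSpace ℝ (Fin n))}
    {𝓛 : Set (Submodule ℝ (EuclideanSpace ℝ (Fin n)))} (hfin : 𝓛.Finite)
    (hdim : ∀ L ∈ 𝓛, Module.finrank ℝ L = 1) (hX : X ⊆ ⋃ L ∈ 𝓛, (L : Set _))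
    (hbdd : Bornology.IsBounded X) {p : ℝ} (hp₀ : 0 ≤ p) (hp₂ : p < 2) :
    energyI p 1 X < ⊤ := by
  have hatom (L) (hL : L ∈ 𝓛) : IsAtom L := Submodule.isAtom_iff_finrank_eq_one.2 (hdim L hL)
  obtain ⟨K, hK⟩ := exists_pairwise_transverseWith hfin (fun _ _ ↦ inferInstance)
    fun L hL M hM ↦ (hatom L hL).disjoint_of_ne (hatom M hM)
  set C := ENNReal.ofReal (2 * (K + 1) ^ 2)
  have henergy : energyI p 1 X ≤ (∫⁻ x in X, (C / ‖x‖ₑ) ^ (p / 2) ∂μH[1]) ^ 2 :=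
    energyI_le_sq_lintegral (by fun_prop)
      (fun x hx y hy ↦ kappaI_le_ofReal_div_enorm hdim hK hX hx hy) hp₀ 1
  have hnorm : ∫⁻ x in X, ‖x‖ₑ ^ (-(p / 2)) ∂μH[1] < ⊤ := by
    simpa using setLIntegral_enorm_rpow_neg_lt_top_of_subset_biUnion_submodule one_pos hfin hdim
      hX hbdd (q := p / 2) (by norm_num; linarith)
  have hpow (x : EuclideanSpace ℝ (Fin n)) :
      (C / ‖x‖ₑ) ^ (p / 2) = C ^ (p / 2) * ‖x‖ₑ ^ (-(p / 2)) := by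
    rw [ENNReal.div_rpow_of_nonneg _ _ (by positivity), ENNReal.rpow_neg, div_eq_mul_inv]
  refine henergy.trans_lt (ENNReal.pow_lt_top ?_)
  rw [lintegral_congr hpow, lintegral_const_mul _ (by fun_prop)]
  have hC : C ^ (p / 2) < ⊤ :=
    ENNReal.rpow_lt_top_of_nonneg (by positivity) ENNReal.ofReal_ne_top
  exact ENNReal.mul_lt_top hC hnorm

/-- The `i`-th coordinate axis of `ℝⁿ`, as a subspace; `Eset` lies on the two axes of `ℝ²`. -/
def coordinateAxis {n : ℕ} (i : Fin n) : Submodule ℝ (EuclideanSpace ℝ (Fin n)) :=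
  ℝ ∙ EuclideanSpace.single i (1 : ℝ)

theorem finrank_coordinateAxis {n : ℕ} (i : Fin n) : Module.finrank ℝ (coordinateAxis i) = 1 :=
  finrank_span_singleton (by simp)

theorem Eset_subset_biUnion_coordinateAxis :
    Eset ⊆ ⋃ L ∈ range (coordinateAxis (n := 2)), (L : Set (EuclideanSpace ℝ (Fin 2))) := by
  rw [biUnion_range]
  rintro x (⟨hx, -⟩ | ⟨hx, -⟩)
  · refine mem_iUnion.2 ⟨0, Submodule.mem_span_singleton.2 ⟨x 0, ?_⟩⟩
    ext i; fin_cases i <;> simp [hx]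
  · refine mem_iUnion.2 ⟨1, Submodule.mem_span_singleton.2 ⟨x 1, ?_⟩⟩
    ext i; fin_cases i <;> simp [hx]

theorem isBounded_Eset : Bornology.IsBounded Eset := by
  refine (isBounded_closedBall (x := 0) (r := 1)).subset ?_
  rintro x (⟨hx, hx'⟩ | ⟨hx, hx'⟩)
  · simpa [EuclideanSpace.norm_eq, Fin.sum_univ_two, hx, Real.sqrt_sq_eq_abs, abs_le] using hx'
  · have hx' : x 1 ∈ Icc (-1 : ℝ) 1 := Icc_subset_Icc_left (by norm_num) hx'
    simpa [EuclideanSpace.norm_eq, Fin.sum_univ_two, hx, Real.sqrt_sq_eq_abs, abs_le] using hx'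

theorem Eset_energyI_lt_top_all (p : ℝ) (hp : p ∈ Set.Ioo (0 : ℝ) 2) :
    energyI p 1 Eset < ⊤ :=
  Eset_energyI_lt_top_all_general (finite_range coordinateAxis)
    (forall_mem_range.2 finrank_coordinateAxis) Eset_subset_biUnion_coordinateAxis isBounded_Eset
    hp.1.le hp.2

end
end
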